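/- Let n be a nonnegative integer and let ξ_1, …, ξ_n be any points in [0,1]. Then there exists a continuously differentiable function f : [0,1] → ℝ whose derivative f′ is Lipschitz with constant 1 on [0,1] (so that ‖f″‖_∞ ≤ 1 where f is twice differentiable), such that f(ξ_i) = 0 for all i = 1,…,n and sup_{0≤x≤1} |f(x)| ≥ 1/(16(n+1)²). (Fooling-function construction underlying the lower complexity bound for L∞ function recovery on balls: f is a bump with piecewise constant second derivative supported on the largest gap between consecutive sample points.) -/

import Mathlib

open Set

lemma hasDerivAt_max_zero_sq_div_two (x : ℝ) :
    HasDerivAt (fun t : ℝ => max t 0 ^ 2 / 2) (max x 0) x := by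
  have key : ∀ y : ℝ, y ≠ 0 → HasDerivAt (fun t : ℝ => max t 0 ^ 2 / 2) (max y 0) y := by
    intro y hy
    rcases lt_or_gt_of_ne hy with h | h
    · rw [max_eq_right h.le]
      refine (hasDerivAt_const y (0 : ℝ)).congr_of_eventuallyEq ?_
      filter_upwards [eventually_lt_nhds h] with t ht
      simp [max_eq_right ht.le]
    · rw [max_eq_left h.le]
      have h2 : HasDerivAt (fun t : ℝ => t ^ 2 / 2) y y := by
        simpa using (hasDerivAt_pow 2 y).div_const 2
      refine h2.congr_of_eventuallyEq ?_
      filter_upwards [eventually_gt_nhds h] with t ht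
      simp [max_eq_left ht.le]
  by_cases hx : x = 0
  · subst hx
    exact hasDerivAt_of_hasDerivAt_of_ne (g := fun y => max y 0) key (by fun_prop) (by fun_prop)
  · exact key x hx

/-- The bump of half-width `h` centred at `c` whose second derivative is `1`, `-1`, `1` on
successive pieces of its support. -/
noncomputable def quadraticBump (c h x : ℝ) : ℝ :=
  max (x - (c - h)) 0 ^ 2 / 2 - 2 * (max (x - (c - h / 2)) 0 ^ 2 / 2)
    + 2 * (max (x - (c + h / 2)) 0 ^ 2 / 2) - max (x - (c + h)) 0 ^ 2 / 2

/-- The derivative of `quadraticBump c h`, written as a lattice polynomial in functions of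
slope `0` and `±1`. -/
noncomputable def quadraticBumpDeriv (c h x : ℝ) : ℝ :=
  max (min (max (x - (c - h)) 0) (c - x)) (min (x - (c + h)) 0)

lemma hasDerivAt_quadraticBump {h : ℝ} (hh : 0 < h) (c x : ℝ) :
    HasDerivAt (quadraticBump c h) (quadraticBumpDeriv c h x) x := by
  have key (a : ℝ) : HasDerivAt (fun t : ℝ => max (t - a) 0 ^ 2 / 2) (max (x - a) 0) x :=
    (hasDerivAt_max_zero_sq_div_two (x - a)).comp_sub_const x a
  have hsum := (((key (c - h)).sub ((key (c - h / 2)).const_mul 2)).add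
    ((key (c + h / 2)).const_mul 2)).sub (key (c + h))
  refine hsum.congr_deriv ?_
  unfold quadraticBumpDeriv
  grind

lemma lipschitzWith_quadraticBumpDeriv (c h : ℝ) :
    LipschitzWith 1 (quadraticBumpDeriv c h) := by
  have hsub (a : ℝ) : LipschitzWith 1 fun x : ℝ => x - a :=
    (IsometryEquiv.subRight a).isometry.lipschitz
  have hneg : LipschitzWith 1 fun x : ℝ => c - x :=
    (IsometryEquiv.subLeft c).isometry.lipschitz
  have := (((hsub (c - h)).max_const 0).min hneg).max ((hsub (c + h)).min_const 0)
  rwa [max_self, max_self] at this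

lemma quadraticBump_eq_zero {c h x : ℝ} (hh : 0 ≤ h) (hx : x ∉ Ioo (c - h) (c + h)) :
    quadraticBump c h x = 0 := by
  unfold quadraticBump
  rcases le_or_gt x (c - h) with h1 | h1
  · simp [max_eq_right (show x - (c - h) ≤ 0 by linarith),
      max_eq_right (show x - (c - h / 2) ≤ 0 by linarith),
      max_eq_right (show x - (c + h / 2) ≤ 0 by linarith),
      max_eq_right (show x - (c + h) ≤ 0 by linarith)]
  · have h2 : c + h ≤ x := not_lt.mp fun h2 => hx ⟨h1, h2⟩
    rw [max_eq_left (show 0 ≤ x - (c - h) by linarith),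
      max_eq_left (show 0 ≤ x - (c - h / 2) by linarith),
      max_eq_left (show 0 ≤ x - (c + h / 2) by linarith),
      max_eq_left (show 0 ≤ x - (c + h) by linarith)]
    ring

lemma quadraticBump_self {h : ℝ} (hh : 0 ≤ h) (c : ℝ) :
    quadraticBump c h c = h ^ 2 / 4 := by
  unfold quadraticBump
  rw [max_eq_left (show 0 ≤ c - (c - h) by linarith),
    max_eq_left (show 0 ≤ c - (c - h / 2) by linarith),
    max_eq_right (show c - (c + h / 2) ≤ 0 by linarith),
    max_eq_right (show c - (c + h) ≤ 0 by linarith)]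
  ring

/-- Among the `n + 1` intervals of the uniform partition of `[0, 1]`, one has no point of a given
`n`-point family in its interior. -/
lemma exists_uniform_gap (n : ℕ) (ξ : Fin n → ℝ) :
    ∃ k : ℕ, k ≤ n ∧ ∀ i, ξ i ∉ Ioo ((k : ℝ) / (n + 1)) ((k + 1) / (n + 1)) := by
  classical
  obtain ⟨k, hk, hk'⟩ := Finset.exists_mem_notMem_of_card_lt_card
    (s := Finset.univ.image fun i => ⌊ξ i * (n + 1)⌋₊) (t := Finset.range (n + 1))
    (by
      refine Finset.card_image_le.trans_lt ?_
      simp)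
  refine ⟨k, Nat.lt_succ_iff.mp (Finset.mem_range.mp hk), fun i hi => hk' ?_⟩
  have hn : (0 : ℝ) < n + 1 := by positivity
  have h1 := (div_lt_iff₀ hn).mp hi.1
  have h2 := (lt_div_iff₀ hn).mp hi.2
  exact Finset.mem_image.mpr ⟨i, Finset.mem_univ i,
    (Nat.floor_eq_iff (k.cast_nonneg.trans h1.le)).mpr ⟨h1.le, h2⟩⟩

/-- Fooling-function construction for the lower complexity bound for `L∞` recovery on
balls: for any sample points `ξ_1,…,ξ_n` in `[0,1]` there is a continuously
differentiable `f` whose derivative is Lipschitz with constant `1` (so `‖f″‖_∞ ≤ 1`),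
vanishing at every `ξ_i`, with `‖f‖_∞ ≥ 1/(16(n+1)²)`. -/
theorem fooling_function_recovery
    (n : ℕ) (ξ : Fin n → ℝ) (hξ : ∀ i, ξ i ∈ Icc (0:ℝ) 1) :
    ∃ f f' : ℝ → ℝ,
      (∀ x ∈ Icc (0:ℝ) 1, HasDerivWithinAt f (f' x) (Icc 0 1) x) ∧
      ContinuousOn f' (Icc 0 1) ∧
      LipschitzOnWith 1 f' (Icc 0 1) ∧
      (∀ i, f (ξ i) = 0) ∧
      ∃ x ∈ Icc (0:ℝ) 1, 1 / (16 * ((n : ℝ) + 1) ^ 2) ≤ |f x| := by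
  obtain ⟨k, hk, hgap⟩ := exists_uniform_gap n ξ
  have hn : (0 : ℝ) < n + 1 := by positivity
  have hkn : (k : ℝ) ≤ n := by exact_mod_cast hk
  set h : ℝ := 1 / (2 * (n + 1)) with h_def
  set c : ℝ := (2 * k + 1) / (2 * (n + 1)) with c_def
  have hh : 0 < h := by positivity
  have hleft : c - h = k / (n + 1) := by rw [c_def, h_def]; field_simp; ring
  have hright : c + h = (k + 1) / (n + 1) := by rw [c_def, h_def]; field_simp; ring
  have hlip := lipschitzWith_quadraticBumpDeriv c h
  refine ⟨quadraticBump c h, quadraticBumpDeriv c h,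
    fun x _ => (hasDerivAt_quadraticBump hh c x).hasDerivWithinAt,
    hlip.continuous.continuousOn, hlip.lipschitzOnWith,
    fun i => quadraticBump_eq_zero hh.le ?_, c, ⟨by positivity, ?_⟩, ?_⟩
  · rw [hleft, hright]
    exact hgap i
  · rw [c_def, div_le_one (by positivity)]
    linarith
  · rw [quadraticBump_self hh.le, abs_of_nonneg (by positivity)]
    refine le_of_eq ?_
    rw [h_def]
    field_simp
    norm_num
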